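/- arXiv:1911.02823 — 6 statements merged into one kernel-verified Lean document; each statement's English description precedes it below -/
import Mathlib

section
/- Let x, y be unit quaternions and α, β imaginary quaternions, and set Z = (xα, yβ), so that PZ = (xβ, yα). Then G(Z, PZ) = (2/√3)·(x(α×β), y(α×β)) and J·G(Z, PZ) = (2/3)·(x(α×β), −y(α×β)). -/
open Quaternion

/-- The cross product `α×β = (αβ − βα)/2` of (imaginary) quaternions. -/
noncomputable def qcross (x y : ℍ[ℝ]) : ℍ[ℝ] := (x * y - y * x) / 2

/-- The almost complex structure of the nearly Kähler `S³ × S³` at `(p, q)`. -/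
noncomputable def Jmap (p q : ℍ[ℝ]) (Z : ℍ[ℝ] × ℍ[ℝ]) : ℍ[ℝ] × ℍ[ℝ] :=
  ((Real.sqrt 3)⁻¹ • (2 * (p * q⁻¹ * Z.2) - Z.1),
   (Real.sqrt 3)⁻¹ • (-(2 * (q * p⁻¹ * Z.1)) + Z.2))

/-- The almost product structure `P(U,V) = (pq⁻¹V, qp⁻¹U)` at `(p, q)`. -/
noncomputable def Pmap (p q : ℍ[ℝ]) (Z : ℍ[ℝ] × ℍ[ℝ]) : ℍ[ℝ] × ℍ[ℝ] :=
  (p * q⁻¹ * Z.2, q * p⁻¹ * Z.1)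

/-- The tensor `G = ∇J` of the nearly Kähler `S³ × S³` at `(p, q)`, for tangent vectors
`X = (pα, qβ)`, `Y = (pγ, qδ)`. -/
noncomputable def Gmap (p q : ℍ[ℝ]) (X Y : ℍ[ℝ] × ℍ[ℝ]) : ℍ[ℝ] × ℍ[ℝ] :=
  ((2 / (3 * Real.sqrt 3)) •
      (p * (qcross (q⁻¹ * X.2) (p⁻¹ * Y.1) + qcross (p⁻¹ * X.1) (q⁻¹ * Y.2) +
            qcross (p⁻¹ * X.1) (p⁻¹ * Y.1) - 2 * qcross (q⁻¹ * X.2) (q⁻¹ * Y.2))),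
   (2 / (3 * Real.sqrt 3)) •
      (q * (-qcross (p⁻¹ * X.1) (q⁻¹ * Y.2) - qcross (q⁻¹ * X.2) (p⁻¹ * Y.1) +
            2 * qcross (p⁻¹ * X.1) (p⁻¹ * Y.1) - qcross (q⁻¹ * X.2) (q⁻¹ * Y.2))))

/-!
In the left trivialization `(α, β) ↦ (pα, qβ)` the tensors `P`, `J` and `G` do not depend on the
base point, and `P` swaps the two coordinates. By skew-symmetry of the cross product, `G` of a pair
and its swap has both coordinates equal to `2 / (3√3)` times `3 (α × β)`. On a pair with equal
coordinates, `J` only scales by `1 / √3` and changes the sign of the second coordinate.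
-/

lemma qcross_self (α : ℍ[ℝ]) : qcross α α = 0 := by
  simp [qcross]

lemma neg_qcross (α β : ℍ[ℝ]) : -qcross α β = qcross β α := by
  rw [qcross, qcross, ← neg_div, neg_sub]

lemma Jmap_smul (p q : ℍ[ℝ]) (r : ℝ) (Z : ℍ[ℝ] × ℍ[ℝ]) :
    Jmap p q (r • Z) = r • Jmap p q Z := by
  ext1 <;> simp only [Jmap, Prod.smul_fst, Prod.smul_snd, mul_smul_comm] <;> module

section LeftTrivialization

variable {p q : ℍ[ℝ]}

lemma Pmap_mul_mul (hp : p ≠ 0) (hq : q ≠ 0) (α β : ℍ[ℝ]) :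
    Pmap p q (p * α, q * β) = (p * β, q * α) := by
  simp only [Pmap, mul_assoc, inv_mul_cancel_left₀ hp, inv_mul_cancel_left₀ hq]

lemma Jmap_mul_mul (hp : p ≠ 0) (hq : q ≠ 0) (α β : ℍ[ℝ]) :
    Jmap p q (p * α, q * β) = (√3)⁻¹ • (p * (2 * β - α), q * (β - 2 * α)) := by
  simp only [Jmap, mul_assoc, inv_mul_cancel_left₀ hp, inv_mul_cancel_left₀ hq, Prod.smul_mk]
  congr 2 <;> noncomm_ring

lemma Jmap_mul_mul_self (hp : p ≠ 0) (hq : q ≠ 0) (γ : ℍ[ℝ]) :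
    Jmap p q (p * γ, q * γ) = (√3)⁻¹ • (p * γ, -(q * γ)) := by
  rw [Jmap_mul_mul hp hq, two_mul, add_sub_cancel_right, sub_add_cancel_left, mul_neg]

lemma Gmap_mul_mul (hp : p ≠ 0) (hq : q ≠ 0) (α β γ δ : ℍ[ℝ]) :
    Gmap p q (p * α, q * β) (p * γ, q * δ) =
      (2 / (3 * √3)) •
        (p * (qcross β γ + qcross α δ + qcross α γ - 2 * qcross β δ),
          q * (-qcross α δ - qcross β γ + 2 * qcross α γ - qcross β δ)) := by
  simp only [Gmap, inv_mul_cancel_left₀ hp, inv_mul_cancel_left₀ hq, Prod.smul_mk]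

lemma Gmap_mul_mul_swap (hp : p ≠ 0) (hq : q ≠ 0) (α β : ℍ[ℝ]) :
    Gmap p q (p * α, q * β) (p * β, q * α) =
      (2 / √3) • (p * qcross α β, q * qcross α β) := by
  have left_coordinate : qcross β β + qcross α α + qcross α β - 2 * qcross β α =
      (3 : ℝ) • qcross α β := by
    rw [qcross_self, qcross_self, ← neg_qcross α β, two_mul]
    module
  have right_coordinate : -qcross α α - qcross β β + 2 * qcross α β - qcross β α =
      (3 : ℝ) • qcross α β := by
    rw [qcross_self, qcross_self, ← neg_qcross α β, two_mul]
    module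
  have scalar : 2 / (3 * √3) * 3 = 2 / √3 := by field_simp
  rw [Gmap_mul_mul hp hq, left_coordinate, right_coordinate, mul_smul_comm, mul_smul_comm,
    ← Prod.smul_mk, smul_smul, scalar]

end LeftTrivialization

theorem G_Z_PZ_general {x y : ℍ[ℝ]} (hx : x ≠ 0) (hy : y ≠ 0) (α β : ℍ[ℝ]) :
    Gmap x y (x * α, y * β) (Pmap x y (x * α, y * β)) =
      ((2 / √3) • (x * qcross α β), (2 / √3) • (y * qcross α β)) ∧
    Jmap x y (Gmap x y (x * α, y * β) (Pmap x y (x * α, y * β))) =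
      ((2 / 3 : ℝ) • (x * qcross α β), (2 / 3 : ℝ) • (-(y * qcross α β))) := by
  have scalar : 2 / √3 * (√3)⁻¹ = 2 / 3 := by
    rw [← div_eq_mul_inv, div_div, Real.mul_self_sqrt zero_le_three]
  rw [Pmap_mul_mul hx hy, Gmap_mul_mul_swap hx hy, Jmap_smul, Jmap_mul_mul_self hx hy,
    smul_smul, scalar]
  exact ⟨rfl, rfl⟩

/-- For unit quaternions `x, y` and imaginary `α, β`, with `Z = (xα, yβ)` (so that
`PZ = (xβ, yα)`), one has `G(Z,PZ) = (2/√3)(x(α×β), y(α×β))` and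
`J G(Z,PZ) = (2/3)(x(α×β), −y(α×β))`. -/
theorem G_Z_PZ (x y : ℍ[ℝ]) (hx : ‖x‖ = 1) (hy : ‖y‖ = 1)
    (α β : ℍ[ℝ]) (hα : α.re = 0) (hβ : β.re = 0) :
    Gmap x y (x * α, y * β) (Pmap x y (x * α, y * β)) =
      ((2 / Real.sqrt 3) • (x * qcross α β), (2 / Real.sqrt 3) • (y * qcross α β)) ∧
    Jmap x y (Gmap x y (x * α, y * β) (Pmap x y (x * α, y * β))) =
      ((2/3 : ℝ) • (x * qcross α β), (2/3 : ℝ) • (-(y * qcross α β))) :=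
  G_Z_PZ_general (norm_ne_zero_iff.mp (hx ▸ one_ne_zero)) (norm_ne_zero_iff.mp (hy ▸ one_ne_zero))
    α β
end

section
/- Let c₁, c₂ ∈ Im ℍ \ {0} and d₁ ∈ ℝ, and set a = ((1+d₁)/2)‖c₁‖, ã = ((1−d₁)/2)‖c₁‖, b = (1/2)‖c₂‖, c = (2/3)‖c₁‖. Then the functions α(t) = a·i + b·cos(ct)·j − b·sin(ct)·k and β(t) = ã·i − b·cos(ct)·j + b·sin(ct)·k satisfy the geodesic equations α'(t) = (2/3)·α(t)×β(t) and β'(t) = −(2/3)·α(t)×β(t) for all t. -/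
open Quaternion

/-- The imaginary unit `i` of the quaternions. -/
def qi : ℍ[ℝ] := ⟨0, 1, 0, 0⟩

/-- The imaginary unit `j` of the quaternions. -/
def qj : ℍ[ℝ] := ⟨0, 0, 1, 0⟩

/-- The imaginary unit `k` of the quaternions. -/
def qk : ℍ[ℝ] := ⟨0, 0, 0, 1⟩

/-
Split the two curves as `α = p + v` and `β = q - v`, with `p` and `q` constant multiples of `i`.
Since `p` and `q` commute, `α × β = -(p + q) × v`, so both equations reduce to the single linear
equation `v' = -(2/3) (p + q) × v`: the vector `v` precesses about the axis `i` with angular speed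
`c = (2/3) (a + a')`, and `a + a' = ‖c₁‖`.
-/

section CrossProduct

attribute [local instance] LieRing.ofAssociativeRing

theorem qcross_eq_smul_lie (x y : ℍ[ℝ]) : qcross x y = (2⁻¹ : ℝ) • ⁅x, y⁆ := by
  rw [Algebra.smul_def, Algebra.commutes, map_inv₀, map_ofNat, ← div_eq_mul_inv, Ring.lie_def,
    qcross]

theorem qcross_smul_left (r : ℝ) (x y : ℍ[ℝ]) : qcross (r • x) y = r • qcross x y := by
  rw [qcross_eq_smul_lie, qcross_eq_smul_lie, smul_lie, smul_comm]

theorem qcross_smul_right (r : ℝ) (x y : ℍ[ℝ]) : qcross x (r • y) = r • qcross x y := by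
  rw [qcross_eq_smul_lie, qcross_eq_smul_lie, lie_smul, smul_comm]

theorem qcross_sub_right (x y z : ℍ[ℝ]) : qcross x (y - z) = qcross x y - qcross x z := by
  simp only [qcross_eq_smul_lie, lie_sub, smul_sub]

theorem qcross_add_sub_of_commute {p q : ℍ[ℝ]} (hpq : Commute p q) (v : ℍ[ℝ]) :
    qcross (p + v) (q - v) = -qcross (p + q) v := by
  have lie_eq : ⁅p + v, q - v⁆ = -⁅p + q, v⁆ := by
    rw [add_lie, lie_sub, lie_sub, hpq.lie_eq, lie_self, ← lie_skew v q, add_lie]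
    abel
  rw [qcross_eq_smul_lie, qcross_eq_smul_lie, lie_eq, smul_neg]

end CrossProduct

theorem qi_mul_qj : qi * qj = qk := by
  apply Quaternion.ext <;> simp only [re_mul, imI_mul, imJ_mul, imK_mul] <;> norm_num [qi, qj, qk]

theorem qj_mul_qi : qj * qi = -qk := by
  apply Quaternion.ext <;>
    simp only [re_mul, imI_mul, imJ_mul, imK_mul, re_neg, imI_neg, imJ_neg, imK_neg] <;>
    norm_num [qi, qj, qk]

theorem qi_mul_qk : qi * qk = -qj := by
  apply Quaternion.ext <;>
    simp only [re_mul, imI_mul, imJ_mul, imK_mul, re_neg, imI_neg, imJ_neg, imK_neg] <;>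
    norm_num [qi, qj, qk]

theorem qk_mul_qi : qk * qi = qj := by
  apply Quaternion.ext <;> simp only [re_mul, imI_mul, imJ_mul, imK_mul] <;> norm_num [qi, qj, qk]

theorem qcross_qi_qj : qcross qi qj = qk := by
  rw [qcross_eq_smul_lie, Ring.lie_def, qi_mul_qj, qj_mul_qi]
  module

theorem qcross_qi_qk : qcross qi qk = -qj := by
  rw [qcross_eq_smul_lie, Ring.lie_def, qi_mul_qk, qk_mul_qi]
  module

theorem hasDerivAt_cos_smul_sub_sin_smul {E : Type*} [NormedAddCommGroup E] [NormedSpace ℝ E]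
    (b c : ℝ) (x y : E) (t : ℝ) :
    HasDerivAt (fun s => (b * Real.cos (c * s)) • x - (b * Real.sin (c * s)) • y)
      (-(c • ((b * Real.cos (c * t)) • y + (b * Real.sin (c * t)) • x))) t := by
  have phase : HasDerivAt (fun s => c * s) c t := hasDerivAt_const_mul c
  have hcos := (phase.cos.const_mul b).smul_const x
  have hsin := (phase.sin.const_mul b).smul_const y
  exact (hcos.sub hsin).congr_deriv (by module)

theorem hasDerivAt_precession {u x y : ℍ[ℝ]} (hux : qcross u x = y) (huy : qcross u y = -x)
    (b c t : ℝ) :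
    HasDerivAt (fun s => (b * Real.cos (c * s)) • x - (b * Real.sin (c * s)) • y)
      (-(c • qcross u ((b * Real.cos (c * t)) • x - (b * Real.sin (c * t)) • y))) t := by
  rw [qcross_sub_right, qcross_smul_right, qcross_smul_right, hux, huy, smul_neg, sub_neg_eq_add]
  exact hasDerivAt_cos_smul_sub_sin_smul b c x y t

theorem geodesic_system_of_precession {p q : ℍ[ℝ]} (hpq : Commute p q) {κ : ℝ} {v : ℝ → ℍ[ℝ]}
    {t : ℝ} (hv : HasDerivAt v (-(κ • qcross (p + q) (v t))) t) :
    HasDerivAt (fun s => p + v s) (κ • qcross (p + v t) (q - v t)) t ∧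
      HasDerivAt (fun s => q - v s) (-(κ • qcross (p + v t) (q - v t))) t := by
  rw [qcross_add_sub_of_commute hpq, smul_neg]
  exact ⟨hv.const_add p, hv.const_sub q⟩

theorem explicit_alpha_beta_solve_geodesic_system_general
    {u x y : ℍ[ℝ]} (hux : qcross u x = y) (huy : qcross u y = -x)
    (a a' b c : ℝ) (hc : c = 2 / 3 * (a + a')) :
    (∀ t, HasDerivAt
      (fun s => a • u + (b * Real.cos (c * s)) • x - (b * Real.sin (c * s)) • y)
      ((2 / 3 : ℝ) • qcross
        (a • u + (b * Real.cos (c * t)) • x - (b * Real.sin (c * t)) • y)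
        (a' • u - (b * Real.cos (c * t)) • x + (b * Real.sin (c * t)) • y)) t) ∧
    (∀ t, HasDerivAt
      (fun s => a' • u - (b * Real.cos (c * s)) • x + (b * Real.sin (c * s)) • y)
      (-((2 / 3 : ℝ) • qcross
        (a • u + (b * Real.cos (c * t)) • x - (b * Real.sin (c * t)) • y)
        (a' • u - (b * Real.cos (c * t)) • x + (b * Real.sin (c * t)) • y))) t) := by
  have axes_commute : Commute (a • u) (a' • u) :=
    ((Commute.refl u).smul_left a).smul_right a'
  have axis_eq (v : ℍ[ℝ]) : c • qcross u v = (2 / 3 : ℝ) • qcross (a • u + a' • u) v := by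
    rw [hc, mul_smul, ← add_smul, qcross_smul_left]
  have precession (t : ℝ) := hasDerivAt_precession hux huy b c t
  simp only [axis_eq] at precession
  simp only [add_sub_assoc, sub_add]
  exact forall_and.mp fun t => geodesic_system_of_precession axes_commute (precession t)

/-- For `c₁, c₂ ∈ Im ℍ \ {0}`, `d₁ ∈ ℝ`, with `a = ((1+d₁)/2)‖c₁‖`, `a' = ((1−d₁)/2)‖c₁‖`,
`b = (1/2)‖c₂‖`, `c = (2/3)‖c₁‖`, the functions
`α(t) = a i + b cos(ct) j − b sin(ct) k` and `β(t) = a' i − b cos(ct) j + b sin(ct) k`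
satisfy the geodesic equations `α' = (2/3) α×β` and `β' = −(2/3) α×β`. -/
theorem explicit_alpha_beta_solve_geodesic_system
    (c₁ c₂ : ℍ[ℝ]) (hc₁im : c₁.re = 0) (hc₂im : c₂.re = 0)
    (hc₁ : c₁ ≠ 0) (hc₂ : c₂ ≠ 0) (d₁ a a' b c : ℝ)
    (ha : a = (1 + d₁) / 2 * ‖c₁‖) (ha2 : a' = (1 - d₁) / 2 * ‖c₁‖)
    (hb : b = (1/2) * ‖c₂‖) (hc : c = (2/3) * ‖c₁‖) :
    (∀ t, HasDerivAt
      (fun s => a • qi + (b * Real.cos (c * s)) • qj - (b * Real.sin (c * s)) • qk)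
      ((2/3 : ℝ) • qcross
        (a • qi + (b * Real.cos (c * t)) • qj - (b * Real.sin (c * t)) • qk)
        (a' • qi - (b * Real.cos (c * t)) • qj + (b * Real.sin (c * t)) • qk)) t) ∧
    (∀ t, HasDerivAt
      (fun s => a' • qi - (b * Real.cos (c * s)) • qj + (b * Real.sin (c * s)) • qk)
      (-((2/3 : ℝ) • qcross
        (a • qi + (b * Real.cos (c * t)) • qj - (b * Real.sin (c * t)) • qk)
        (a' • qi - (b * Real.cos (c * t)) • qj + (b * Real.sin (c * t)) • qk))) t) := by
  have angular_velocity : c = 2 / 3 * (a + a') := by rw [hc, ha, ha2]; ring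
  exact explicit_alpha_beta_solve_geodesic_system_general qcross_qi_qj qcross_qi_qk a a' b c
    angular_velocity
end

section
/- Let a, c ∈ ℝ and b ∈ ℝ \ {0}, and define A = (c + √((2a−c)² + 4b²))/2, B = (c − √((2a−c)² + 4b²))/2 and φ = (c − 2a + √((c−2a)² + 4b²))/(2b). Then the quaternion-valued function f(t) = (1/(1+φ²))·(cos(At) + φ²cos(Bt)) + (1/(1+φ²))·(sin(At) + φ²sin(Bt))·i + (φ/(1+φ²))·(sin(At) − sin(Bt))·j + (φ/(1+φ²))·(cos(At) − cos(Bt))·k satisfies f(0) = 1, f'(t) = f(t)·(a·i + b·cos(ct)·j − b·sin(ct)·k) for all t, and ‖f(t)‖ = 1 for all t. -/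
/-!
Passing to the frame carried along by `exp (t (c / 2) i)`, which rotates about `i` at rate `c`,
turns the driving field into the constant `(a - c / 2) i + b j = m n`, where `m = (A - B) / 2` and
the unit vector `n` has stereographic coordinate `φ`. The solution is therefore
`exp (t m n) * exp (t (c / 2) i)`, and `fSol` is this product written out in coordinates.
-/

open Quaternion

/-- The explicit quaternion-valued function
`f(t) = (1/(1+φ²))(cos At + φ² cos Bt) + (1/(1+φ²))(sin At + φ² sin Bt) i
      + (φ/(1+φ²))(sin At − sin Bt) j + (φ/(1+φ²))(cos At − cos Bt) k`. -/
noncomputable def fSol (A B φ : ℝ) (t : ℝ) : ℍ[ℝ] :=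
  ((1 / (1 + φ^2)) * (Real.cos (A * t) + φ^2 * Real.cos (B * t))) • (1 : ℍ[ℝ]) +
    ((1 / (1 + φ^2)) * (Real.sin (A * t) + φ^2 * Real.sin (B * t))) • qi +
    ((φ / (1 + φ^2)) * (Real.sin (A * t) - Real.sin (B * t))) • qj +
    ((φ / (1 + φ^2)) * (Real.cos (A * t) - Real.cos (B * t))) • qk

@[simp] theorem re_qi : qi.re = 0 := rfl
@[simp] theorem imI_qi : qi.imI = 1 := rfl
@[simp] theorem imJ_qi : qi.imJ = 0 := rfl
@[simp] theorem imK_qi : qi.imK = 0 := rfl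
@[simp] theorem re_qj : qj.re = 0 := rfl
@[simp] theorem imI_qj : qj.imI = 0 := rfl
@[simp] theorem imJ_qj : qj.imJ = 1 := rfl
@[simp] theorem imK_qj : qj.imK = 0 := rfl
@[simp] theorem re_qk : qk.re = 0 := rfl
@[simp] theorem imI_qk : qk.imI = 0 := rfl
@[simp] theorem imJ_qk : qk.imJ = 0 := rfl
@[simp] theorem imK_qk : qk.imK = 1 := rfl

section Exponential

open NormedSpace (exp)

theorem hasDerivAt_exp_smul_mul_exp_smul {𝕂 𝔸 : Type*} [RCLike 𝕂] [NormedRing 𝔸]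
    [NormedAlgebra 𝕂 𝔸] [CompleteSpace 𝔸] {x y z : 𝔸} {t : 𝕂}
    (h : SemiconjBy (exp (t • y)) z x) :
    HasDerivAt (fun s : 𝕂 => exp (s • x) * exp (s • y))
      (exp (t • x) * exp (t • y) * (z + y)) t := by
  refine ((hasDerivAt_exp_smul_const x t).mul (hasDerivAt_exp_smul_const y t)).congr_deriv ?_
  rw [mul_assoc _ x, ← h.eq]
  noncomm_ring

theorem norm_exp_of_re_eq_zero {q : ℍ[ℝ]} (hq : q.re = 0) : ‖exp q‖ = 1 := by
  rw [Quaternion.norm_exp, hq, NormedSpace.exp_zero, norm_one]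

theorem exp_smul_of_re_eq_zero_of_norm_eq_one {q : ℍ[ℝ]} (hre : q.re = 0) (hq : ‖q‖ = 1) (θ : ℝ) :
    exp (θ • q) = ↑(Real.cos θ) + Real.sin θ • q := by
  have sin_abs_div_abs_mul : Real.sin |θ| / |θ| * θ = Real.sin θ := by
    rcases eq_or_ne θ 0 with rfl | hθ
    · simp
    · rcases abs_choice θ with h | h <;> rw [h] <;> simp [hθ]
  rw [Quaternion.exp_of_re_eq_zero _ (by simp [hre]), norm_smul, hq, mul_one, Real.norm_eq_abs,
    Real.cos_abs, smul_smul, sin_abs_div_abs_mul]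

theorem norm_eq_one_iff_normSq_eq_one {q : ℍ[ℝ]} : ‖q‖ = 1 ↔ Quaternion.normSq q = 1 := by
  rw [Quaternion.normSq_eq_norm_mul_self, ← sq,
    pow_eq_one_iff_of_nonneg (norm_nonneg q) two_ne_zero]

theorem norm_qi : ‖qi‖ = 1 := by
  simp [norm_eq_one_iff_normSq_eq_one, Quaternion.normSq_def']

theorem exp_smul_qi (θ : ℝ) : exp (θ • qi) = ↑(Real.cos θ) + Real.sin θ • qi :=
  exp_smul_of_re_eq_zero_of_norm_eq_one rfl norm_qi θ

theorem semiconjBy_exp_smul_qi (θ u v : ℝ) :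
    SemiconjBy (exp (θ • qi))
      (u • qi + (v * Real.cos (2 * θ)) • qj - (v * Real.sin (2 * θ)) • qk) (u • qi + v • qj) := by
  rw [SemiconjBy, exp_smul_qi, Real.cos_two_mul, Real.sin_two_mul]
  have pythagoras := Real.sin_sq_add_cos_sq θ
  ext <;> simp
  · ring
  · ring
  · linear_combination (2 * v * Real.cos θ) * pythagoras
  · ring

/-- The unit imaginary quaternion in the `i`-`j` plane with stereographic coordinate `φ`, i.e.
`(1 - φ k)⁻¹ i (1 - φ k)`: the rotation axis of the solution in the rotating frame. -/
noncomputable def stereoAxis (φ : ℝ) : ℍ[ℝ] :=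
  ((1 - φ ^ 2) / (1 + φ ^ 2)) • qi + (2 * φ / (1 + φ ^ 2)) • qj

theorem re_stereoAxis (φ : ℝ) : (stereoAxis φ).re = 0 := by
  simp [stereoAxis]

theorem norm_stereoAxis (φ : ℝ) : ‖stereoAxis φ‖ = 1 := by
  have normSq_eq : Quaternion.normSq (stereoAxis φ) =
      ((1 - φ ^ 2) / (1 + φ ^ 2)) ^ 2 + (2 * φ / (1 + φ ^ 2)) ^ 2 := by
    simp [Quaternion.normSq_def', stereoAxis]
  rw [norm_eq_one_iff_normSq_eq_one, normSq_eq]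
  field_simp
  ring

theorem fSol_eq_exp_mul_exp (A B φ t : ℝ) :
    fSol A B φ t = exp (t • ((A - B) / 2) • stereoAxis φ) * exp (t • ((A + B) / 2) • qi) := by
  set μ := t * ((A - B) / 2) with hμ
  set θ := t * ((A + B) / 2) with hθ
  have hA : A * t = θ + μ := by rw [hμ, hθ]; ring
  have hB : B * t = θ - μ := by rw [hμ, hθ]; ring
  rw [smul_smul, smul_smul, ← hμ, ← hθ, exp_smul_qi,
    exp_smul_of_re_eq_zero_of_norm_eq_one (re_stereoAxis φ) (norm_stereoAxis φ), fSol, hA, hB,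
    Real.cos_add, Real.cos_sub, Real.sin_add, Real.sin_sub]
  ext <;> simp [stereoAxis] <;> field_simp <;> ring

theorem fSol_zero (A B φ : ℝ) : fSol A B φ 0 = 1 := by
  simp [fSol_eq_exp_mul_exp]

theorem norm_fSol (A B φ t : ℝ) : ‖fSol A B φ t‖ = 1 := by
  rw [fSol_eq_exp_mul_exp, norm_mul, norm_exp_of_re_eq_zero (by simp [re_stereoAxis]),
    norm_exp_of_re_eq_zero (by simp), mul_one]

-- The hypotheses say that `(1, φ)` is an eigenvector of `!![a, b; b, c - a]` with eigenvalue `A`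
-- and, by the trace, that `B` is the other eigenvalue.
theorem smul_stereoAxis {a b c A B φ : ℝ} (hA : a + b * φ = A) (hφ : b + (c - a) * φ = A * φ)
    (hc : A + B = c) : ((A - B) / 2) • stereoAxis φ = (a - c / 2) • qi + b • qj := by
  ext <;> simp [stereoAxis] <;> field_simp
  · linear_combination -2 * hA + (φ ^ 2 - 1) * hc + 2 * φ * hφ
  · linear_combination -φ * hA - hφ - φ * hc

theorem hasDerivAt_fSol {a b c A B φ : ℝ} (hA : a + b * φ = A) (hφ : b + (c - a) * φ = A * φ)
    (hc : A + B = c) (t : ℝ) :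
    HasDerivAt (fSol A B φ)
      (fSol A B φ t * (a • qi + (b * Real.cos (c * t)) • qj - (b * Real.sin (c * t)) • qk)) t := by
  have rotating_frame := semiconjBy_exp_smul_qi (t * (c / 2)) (a - c / 2) b
  rw [← smul_stereoAxis hA hφ hc, ← smul_smul, show 2 * (t * (c / 2)) = c * t by ring]
    at rotating_frame
  rw [funext (fSol_eq_exp_mul_exp A B φ), hc]
  refine (hasDerivAt_exp_smul_mul_exp_smul rotating_frame).congr_deriv ?_
  congr 1
  module

end Exponential

/-- For `a, c ∈ ℝ`, `b ≠ 0`, with `A = (c + √((2a−c)² + 4b²))/2`,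
`B = (c − √((2a−c)² + 4b²))/2` and `φ = (c − 2a + √((c−2a)² + 4b²))/(2b)`,
the function `f` satisfies `f(0) = 1`, the ODE
`f'(t) = f(t)(a i + b cos(ct) j − b sin(ct) k)`, and `‖f(t)‖ = 1` for all `t`. -/
theorem fSol_solves_ODE (a b c A B φ : ℝ) (hb : b ≠ 0)
    (hA : A = (c + Real.sqrt ((2*a - c)^2 + 4*b^2)) / 2)
    (hB : B = (c - Real.sqrt ((2*a - c)^2 + 4*b^2)) / 2)
    (hφ : φ = (c - 2*a + Real.sqrt ((c - 2*a)^2 + 4*b^2)) / (2*b)) :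
    fSol A B φ 0 = 1 ∧
    (∀ t, HasDerivAt (fSol A B φ)
      (fSol A B φ t * (a • qi + (b * Real.cos (c * t)) • qj - (b * Real.sin (c * t)) • qk)) t) ∧
    (∀ t, ‖fSol A B φ t‖ = 1) := by
  rw [sub_sq_comm c] at hφ
  have hs := Real.sq_sqrt (show 0 ≤ (2 * a - c) ^ 2 + 4 * b ^ 2 by positivity)
  set s := Real.sqrt ((2 * a - c) ^ 2 + 4 * b ^ 2)
  have eigenvalue_sum : A + B = c := by rw [hA, hB]; ring
  have eigenvector_fst : a + b * φ = A := by rw [hA, hφ]; field_simp; ring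
  have eigenvector_snd : b + (c - a) * φ = A * φ := by
    rw [hA, hφ]
    field_simp
    linear_combination -hs
  exact ⟨fSol_zero A B φ, hasDerivAt_fSol eigenvector_fst eigenvector_snd eigenvalue_sum,
    norm_fSol A B φ⟩
end

section
/- Let a, b, c ∈ ℝ and let g₁, g₂: ℝ → ℂ be differentiable functions satisfying g₁'(t) = g₁(t)·a·i − conj(g₂(t))·b·e^{ict} and g₂'(t) = g₂(t)·a·i + conj(g₁(t))·b·e^{ict} for all t. Then g₁ and g₂ are twice differentiable and satisfy the second order equations g₁''(t) − c·i·g₁'(t) + (a² + b² − ac)·g₁(t) = 0 and g₂''(t) − c·i·g₂'(t) + (a² + b² − ac)·g₂(t) = 0 for all t. -/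
open Complex

/-!
Differentiating `u' = u α - v⋆ φ` and eliminating `v⋆'` by the equation for `v` leaves a term
in `v⋆ φ`; since `φ' = μ φ`, this term can be replaced by `u α - u'`, which decouples `u` from `v`.
The sign change `φ ↦ -φ` interchanges `u` and `v`, so the same computation handles `v`.
-/

section ConjugateCoupling

variable {𝕜 A : Type*} [NontriviallyNormedField 𝕜] [StarRing 𝕜] [TrivialStar 𝕜]
  [NormedCommRing A] [NormedAlgebra 𝕜 A] [StarRing A] [StarModule 𝕜 A] [ContinuousStar A]
  {α μ : A} {φ u v : 𝕜 → A}

theorem hasDerivAt_deriv_of_star_coupled {t : 𝕜} (hφ : HasDerivAt φ (μ * φ t) t)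
    (hu : ∀ s, HasDerivAt u (u s * α - star (v s) * φ s) s)
    (hv : HasDerivAt v (v t * α + star (u t) * φ t) t) :
    HasDerivAt (deriv u)
      ((α + star α + μ) * deriv u t - (star α * α + star (φ t) * φ t + μ * α) * u t) t := by
  have hderiv : deriv u = fun s ↦ u s * α - star (v s) * φ s := funext fun s ↦ (hu s).deriv
  have hstar : HasDerivAt (fun s ↦ star (v s)) (star (v t) * star α + u t * star (φ t)) t := by
    simpa only [star_add, star_mul', star_star] using hv.star
  have hsecond : HasDerivAt (deriv u)
      (deriv u t * α - ((star (v t) * star α + u t * star (φ t)) * φ t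
        + star (v t) * (μ * φ t))) t := by
    rw [(hu t).deriv, hderiv]
    exact ((hu t).mul_const α).sub (hstar.mul hφ)
  have hcoupling : star (v t) * φ t = u t * α - deriv u t := by
    rw [(hu t).deriv, sub_sub_cancel]
  refine hsecond.congr_deriv ?_
  linear_combination (-(star α + μ)) * hcoupling

theorem second_order_from_first_order_system_general
    (hφ : ∀ t, HasDerivAt φ (μ * φ t) t)
    (hu : ∀ t, HasDerivAt u (u t * α - star (v t) * φ t) t)
    (hv : ∀ t, HasDerivAt v (v t * α + star (u t) * φ t) t) :
    (∀ t, HasDerivAt (deriv u)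
      ((α + star α + μ) * deriv u t - (star α * α + star (φ t) * φ t + μ * α) * u t) t) ∧
    (∀ t, HasDerivAt (deriv v)
      ((α + star α + μ) * deriv v t - (star α * α + star (φ t) * φ t + μ * α) * v t) t) := by
  refine ⟨fun t ↦ hasDerivAt_deriv_of_star_coupled (hφ t) hu (hv t), fun t ↦ ?_⟩
  have hφ_neg : HasDerivAt (-φ) (μ * (-φ) t) t := by simpa using (hφ t).neg
  have hv_neg : ∀ s, HasDerivAt v (v s * α - star (u s) * (-φ) s) s := by simpa using hv
  have hu_neg : HasDerivAt u (u t * α + star (v t) * (-φ) t) t := by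
    simpa [← sub_eq_add_neg] using hu t
  simpa using hasDerivAt_deriv_of_star_coupled hφ_neg hv_neg hu_neg

end ConjugateCoupling

theorem hasDerivAt_const_mul_cexp_mul_ofReal (b k : ℂ) (t : ℝ) :
    HasDerivAt (fun s : ℝ ↦ b * exp (k * s)) (k * (b * exp (k * t))) t := by
  refine (((hasDerivAt_id t).ofReal_comp.const_mul k).cexp.const_mul b).congr_deriv ?_
  simp only [id, ofReal_one]
  ring

theorem star_mul_self_const_mul_cexp_I_mul_ofReal (b : ℂ) (c t : ℝ) :
    star (b * exp (I * c * t)) * (b * exp (I * c * t)) = star b * b := by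
  have hnorm : ‖exp (I * c * t)‖ = 1 := by
    rw [mul_assoc, ← ofReal_mul, norm_exp_I_mul_ofReal]
  simp only [star_def, conj_mul', norm_mul, hnorm, mul_one]

theorem damping_coefficient_eq (a c : ℝ) : (a * I : ℂ) + star (a * I : ℂ) + I * c = c * I := by
  simp only [star_def, map_mul, conj_ofReal, conj_I]
  ring

theorem stiffness_coefficient_eq (a b c t : ℝ) :
    star (a * I : ℂ) * (a * I) + star (b * exp (I * c * t)) * (b * exp (I * c * t)) +
      I * c * (a * I) = a ^ 2 + b ^ 2 - a * c := by
  rw [star_mul_self_const_mul_cexp_I_mul_ofReal]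
  simp only [star_def, map_mul, conj_ofReal, conj_I]
  linear_combination (a * c - a ^ 2 : ℂ) * I_sq

/-- If `g₁, g₂ : ℝ → ℂ` satisfy the first order system
`g₁' = g₁ a i − conj(g₂) b e^{ict}`, `g₂' = g₂ a i + conj(g₁) b e^{ict}`,
then they are twice differentiable and satisfy the second order equations
`g₁'' − c i g₁' + (a² + b² − ac) g₁ = 0` and `g₂'' − c i g₂' + (a² + b² − ac) g₂ = 0`. -/
theorem second_order_from_first_order_system (a b c : ℝ) (g₁ g₂ : ℝ → ℂ)
    (h₁ : ∀ t : ℝ, HasDerivAt g₁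
      (g₁ t * (a : ℂ) * Complex.I - (starRingEnd ℂ) (g₂ t) * (b : ℂ) * Complex.exp (Complex.I * (c : ℂ) * (t : ℂ))) t)
    (h₂ : ∀ t : ℝ, HasDerivAt g₂
      (g₂ t * (a : ℂ) * Complex.I + (starRingEnd ℂ) (g₁ t) * (b : ℂ) * Complex.exp (Complex.I * (c : ℂ) * (t : ℂ))) t) :
    (∀ t : ℝ, HasDerivAt (deriv g₁)
      ((c : ℂ) * Complex.I * deriv g₁ t - ((a : ℂ)^2 + (b : ℂ)^2 - (a : ℂ) * (c : ℂ)) * g₁ t) t) ∧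
    (∀ t : ℝ, HasDerivAt (deriv g₂)
      ((c : ℂ) * Complex.I * deriv g₂ t - ((a : ℂ)^2 + (b : ℂ)^2 - (a : ℂ) * (c : ℂ)) * g₂ t) t) := by
  simp only [starRingEnd_apply, mul_assoc _ (a : ℂ) I, mul_assoc _ (b : ℂ) _] at h₁ h₂
  simpa only [damping_coefficient_eq, stiffness_coefficient_eq] using
    second_order_from_first_order_system_general
      (hasDerivAt_const_mul_cexp_mul_ofReal b (I * c)) h₁ h₂
end

section
/- Let α, β: ℝ → Im ℍ be differentiable with α'(t) = (2/3)·α(t)×β(t) and β'(t) = −(2/3)·α(t)×β(t) for all t. Then α and β are both constant functions if and only if α(0)×β(0) = 0. -/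
open Quaternion

/-!
The pair `(α, β)` solves an autonomous equation `x' = v(x)` with `v` polynomial, and `v` vanishes at
`(α(0), β(0))` exactly when `α(0) × β(0) = 0`. A solution of a locally Lipschitz autonomous equation
is constant if and only if it starts at a zero of `v`, because by uniqueness it then agrees with the
constant solution through that point.
-/

open Function Set Topology

section AutonomousODE

variable {E : Type*} [NormedAddCommGroup E] [NormedSpace ℝ E] {v : E → E} {x y : ℝ → E} {t₀ : ℝ}

theorem ODE_solution_eventuallyEq_of_locallyLipschitz (hv : LocallyLipschitz v)
    (hx : ∀ᶠ t in 𝓝 t₀, HasDerivAt x (v (x t)) t) (hy : ∀ᶠ t in 𝓝 t₀, HasDerivAt y (v (y t)) t)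
    (h₀ : x t₀ = y t₀) : x =ᶠ[𝓝 t₀] y := by
  obtain ⟨K, s, hs, hK⟩ := hv (x t₀)
  have hxs : ∀ᶠ t in 𝓝 t₀, x t ∈ s := hx.self_of_nhds.continuousAt hs
  have hys : ∀ᶠ t in 𝓝 t₀, y t ∈ s := hy.self_of_nhds.continuousAt (h₀ ▸ hs)
  exact ODE_solution_unique_of_eventually (v := fun _ ↦ v) (s := fun _ ↦ s)
    (.of_forall fun _ ↦ hK) (hx.and hxs) (hy.and hys) h₀

theorem ODE_solution_unique_of_locallyLipschitz (hv : LocallyLipschitz v)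
    (hx : ∀ t, HasDerivAt x (v (x t)) t) (hy : ∀ t, HasDerivAt y (v (y t)) t)
    (h₀ : x t₀ = y t₀) : x = y := by
  have hx_cont : Continuous x := continuous_iff_continuousAt.2 fun t ↦ (hx t).continuousAt
  have hy_cont : Continuous y := continuous_iff_continuousAt.2 fun t ↦ (hy t).continuousAt
  have h_closed : IsClosed {t | x t = y t} := isClosed_eq hx_cont hy_cont
  have h_open : IsOpen {t | x t = y t} := isOpen_iff_mem_nhds.2 fun _ ht ↦
    ODE_solution_eventuallyEq_of_locallyLipschitz hv (.of_forall hx) (.of_forall hy) ht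
  exact funext <| eq_univ_iff_forall.1 <| IsClopen.eq_univ ⟨h_closed, h_open⟩ ⟨t₀, h₀⟩

theorem ODE_solution_constant_iff_of_locallyLipschitz (hv : LocallyLipschitz v)
    (hx : ∀ t, HasDerivAt x (v (x t)) t) : (∀ t, x t = x t₀) ↔ v (x t₀) = 0 := by
  constructor
  · intro h_const
    have hx_zero : HasDerivAt x 0 t₀ := funext h_const ▸ hasDerivAt_const t₀ (x t₀)
    exact (hx t₀).unique hx_zero
  · intro hv_zero
    have h_const : ∀ t, HasDerivAt (fun _ : ℝ ↦ x t₀) (v (x t₀)) t :=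
      fun t ↦ hv_zero ▸ hasDerivAt_const t (x t₀)
    exact congrFun (ODE_solution_unique_of_locallyLipschitz (t₀ := t₀) hv hx h_const rfl)

end AutonomousODE

theorem constant_iff_cross_zero_general {E : Type*} [NormedAddCommGroup E] [NormedSpace ℝ E]
    {f : E → E → E} (hf : LocallyLipschitz (uncurry f)) {a b : ℝ} (ha : a ≠ 0) {α β : ℝ → E}
    (hα : ∀ t, HasDerivAt α (a • f (α t) (β t)) t)
    (hβ : ∀ t, HasDerivAt β (b • f (α t) (β t)) t) (t₀ : ℝ) :
    ((∀ t, α t = α t₀) ∧ (∀ t, β t = β t₀)) ↔ f (α t₀) (β t₀) = 0 := by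
  have hv : LocallyLipschitz fun p : E × E ↦ (a • uncurry f p, b • uncurry f p) :=
    ((lipschitzWith_smul a).locallyLipschitz.comp hf).prodMk
      ((lipschitzWith_smul b).locallyLipschitz.comp hf)
  have hαβ := ODE_solution_constant_iff_of_locallyLipschitz (x := fun t ↦ (α t, β t)) (t₀ := t₀)
    hv fun t ↦ (hα t).prodMk (hβ t)
  have h_zero : a • f (α t₀) (β t₀) = 0 ∧ b • f (α t₀) (β t₀) = 0 ↔ f (α t₀) (β t₀) = 0 := by
    simp +contextual [ha]
  simpa only [Prod.mk.injEq, Prod.mk_eq_zero, forall_and, uncurry_apply_pair, h_zero] using hαβ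

theorem contDiff_uncurry_qcross {n : WithTop ℕ∞} : ContDiff ℝ n (uncurry qcross) := by
  simp only [uncurry_def, qcross, div_eq_mul_inv]
  fun_prop

/-- If `α, β : ℝ → Im ℍ` satisfy `α' = (2/3) α×β` and `β' = −(2/3) α×β`, then `α` and `β`
are both constant if and only if `α(0)×β(0) = 0`. -/
theorem constant_iff_cross_zero (α β : ℝ → ℍ[ℝ])
    (hαim : ∀ t, (α t).re = 0) (hβim : ∀ t, (β t).re = 0)
    (hα : ∀ t, HasDerivAt α ((2/3 : ℝ) • qcross (α t) (β t)) t)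
    (hβ : ∀ t, HasDerivAt β (-((2/3 : ℝ) • qcross (α t) (β t))) t) :
    ((∀ t, α t = α 0) ∧ (∀ t, β t = β 0)) ↔ qcross (α 0) (β 0) = 0 :=
  constant_iff_cross_zero_general (b := -(2/3)) contDiff_uncurry_qcross.locallyLipschitz
    (by norm_num) hα (by simpa only [neg_smul] using hβ) 0
end

section
/- Let A, B, θ ∈ ℝ with A ≠ B and sin θ · cos θ ≠ 0, and consider the quaternion-valued function f(t) = (cos²θ·cos(At) + sin²θ·cos(Bt)) + (cos²θ·sin(At) + sin²θ·sin(Bt))·i + sinθ·cosθ·(sin(At) − sin(Bt))·j + sinθ·cosθ·(cos(At) − cos(Bt))·k. Then f is periodic (i.e. there exists T > 0 with f(t+T) = f(t) for all t) if and only if A = 0 or B = 0 or B/A is a rational number. -/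
open Quaternion

/-- The spherical component
`f(t) = (cos²θ cos At + sin²θ cos Bt) + (cos²θ sin At + sin²θ sin Bt) i
      + sinθ cosθ (sin At − sin Bt) j + sinθ cosθ (cos At − cos Bt) k`
of a geodesic in case (3). -/
noncomputable def fComp (A B θ : ℝ) (t : ℝ) : ℍ[ℝ] :=
  (Real.cos θ ^ 2 * Real.cos (A * t) + Real.sin θ ^ 2 * Real.cos (B * t)) • (1 : ℍ[ℝ]) +
    (Real.cos θ ^ 2 * Real.sin (A * t) + Real.sin θ ^ 2 * Real.sin (B * t)) • qi +
    (Real.sin θ * Real.cos θ * (Real.sin (A * t) - Real.sin (B * t))) • qj +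
    (Real.sin θ * Real.cos θ * (Real.cos (A * t) - Real.cos (B * t))) • qk

/-!
In complex form, `f t = (cos θ + sin θ k) (cos θ e^{iAt} - sin θ k e^{iBt})`, and `ℍ = ℂ ⊕ k ℂ`.
Since `sin θ` and `cos θ` are nonzero, `T` is a period of `f` exactly when `e^{iAT} = e^{iBT} = 1`,
that is, when `AT` and `BT` both lie in `2πℤ`; the real and `k` components of `f T = f 0` already
force this. A nonzero such `T` exists if and only if `A` and `B` are commensurable.
-/

theorem exists_pos_periodic_iff_exists_ne_zero {G β : Type*} [AddCommGroup G] [LinearOrder G]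
    [IsOrderedAddMonoid G] {f : G → β} :
    (∃ T > 0, f.Periodic T) ↔ ∃ T ≠ 0, f.Periodic T := by
  constructor
  · rintro ⟨T, hT, hf⟩
    exact ⟨T, hT.ne', hf⟩
  · rintro ⟨T, hT, hf⟩
    rcases hT.lt_or_gt with hneg | hpos
    · exact ⟨-T, neg_pos.mpr hneg, hf.neg⟩
    · exact ⟨T, hpos, hf⟩

section Commensurable

variable {K : Type*} [Field K] {a b p : K}

theorem exists_rat_div_eq_of_int_mul_eq [CharZero K] {T : K} {m n : ℤ} (hp : p ≠ 0) (hT : T ≠ 0)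
    (ha : m * p = a * T) (hb : n * p = b * T) : ∃ r : ℚ, b / a = r := by
  -- For `a = 0` the equalities below still hold, every quotient being `x / 0 = 0`.
  refine ⟨n / m, ?_⟩
  calc b / a = (b * T) / (a * T) := (mul_div_mul_right b a hT).symm
    _ = (n * p) / (m * p) := by rw [ha, hb]
    _ = n / m := mul_div_mul_right _ _ hp
    _ = ((n / m : ℚ) : K) := by push_cast; rfl

theorem exists_ne_zero_int_mul_eq (hp : p ≠ 0) (b : K) :
    ∃ T ≠ 0, ∃ n : ℤ, n * p = b * T := by
  by_cases hb : b = 0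
  · exact ⟨1, one_ne_zero, 0, by simp [hb]⟩
  · exact ⟨p / b, div_ne_zero hp hb, 1, by rw [mul_div_cancel₀ p hb, Int.cast_one, one_mul]⟩

theorem exists_ne_zero_int_mul_eq_of_div_eq_rat [CharZero K] {r : ℚ} (hp : p ≠ 0) (ha : a ≠ 0)
    (hr : b / a = r) :
    ∃ T ≠ 0, (∃ m : ℤ, m * p = a * T) ∧ ∃ n : ℤ, n * p = b * T := by
  have hden : (r.den : K) ≠ 0 := Nat.cast_ne_zero.mpr r.den_ne_zero
  have hnum : (r.num : K) = r * r.den := by exact_mod_cast r.mul_den_eq_num.symm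
  refine ⟨r.den * p / a, div_ne_zero (mul_ne_zero hden hp) ha, ⟨r.den, ?_⟩, r.num, ?_⟩
  · rw [Int.cast_natCast, mul_div_cancel₀ _ ha]
  · rw [hnum, ← hr]
    ring

theorem exists_ne_zero_int_mul_eq_iff [CharZero K] (hp : p ≠ 0) :
    (∃ T ≠ 0, (∃ m : ℤ, m * p = a * T) ∧ ∃ n : ℤ, n * p = b * T) ↔
      a = 0 ∨ b = 0 ∨ ∃ r : ℚ, b / a = r := by
  constructor
  · rintro ⟨T, hT, ⟨m, hm⟩, n, hn⟩
    exact .inr (.inr (exists_rat_div_eq_of_int_mul_eq hp hT hm hn))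
  · intro h
    by_cases ha : a = 0
    · obtain ⟨T, hT, hn⟩ := exists_ne_zero_int_mul_eq hp b
      exact ⟨T, hT, ⟨0, by simp [ha]⟩, hn⟩
    · obtain ⟨r, hr⟩ : ∃ r : ℚ, b / a = r := by
        rcases h with h | hb | h
        · exact absurd h ha
        · exact ⟨0, by simp [hb]⟩
        · exact h
      exact exists_ne_zero_int_mul_eq_of_div_eq_rat hp ha hr

end Commensurable

section SphericalComponent

variable {A B θ T : ℝ}

theorem re_fComp (A B θ t : ℝ) : (fComp A B θ t).re =
    Real.cos θ ^ 2 * Real.cos (A * t) + Real.sin θ ^ 2 * Real.cos (B * t) := by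
  simp only [fComp, Quaternion.re_add, Quaternion.re_smul]
  simp [qi, qj, qk]

theorem imK_fComp (A B θ t : ℝ) : (fComp A B θ t).imK =
    Real.sin θ * Real.cos θ * (Real.cos (A * t) - Real.cos (B * t)) := by
  simp only [fComp, Quaternion.imK_add, Quaternion.imK_smul]
  simp [qi, qj, qk]

theorem fComp_zero (A B θ : ℝ) : fComp A B θ 0 = 1 := by
  simp [fComp]

theorem cos_eq_one_of_fComp_eq_one (hθ : Real.sin θ * Real.cos θ ≠ 0) (h : fComp A B θ T = 1) :
    Real.cos (A * T) = 1 ∧ Real.cos (B * T) = 1 := by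
  have hk : Real.sin θ * Real.cos θ * (Real.cos (A * T) - Real.cos (B * T)) = 0 := by
    rw [← imK_fComp, h, Quaternion.imK_one]
  have hre : Real.cos θ ^ 2 * Real.cos (A * T) + Real.sin θ ^ 2 * Real.cos (B * T) = 1 := by
    rw [← re_fComp, h, Quaternion.re_one]
  have hcos : Real.cos (A * T) = Real.cos (B * T) :=
    sub_eq_zero.mp ((mul_eq_zero.mp hk).resolve_left hθ)
  have hB : Real.cos (B * T) = 1 := by
    rwa [hcos, ← add_mul, Real.cos_sq_add_sin_sq, one_mul] at hre
  exact ⟨hcos.trans hB, hB⟩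

theorem periodic_fComp_iff (hθ : Real.sin θ * Real.cos θ ≠ 0) :
    (fComp A B θ).Periodic T ↔
      (∃ m : ℤ, m * (2 * Real.pi) = A * T) ∧ ∃ n : ℤ, n * (2 * Real.pi) = B * T := by
  constructor
  · intro h
    obtain ⟨hA, hB⟩ := cos_eq_one_of_fComp_eq_one hθ (h.eq.trans (fComp_zero A B θ))
    exact ⟨(Real.cos_eq_one_iff _).mp hA, (Real.cos_eq_one_iff _).mp hB⟩
  · rintro ⟨⟨m, hm⟩, n, hn⟩ t
    simp only [fComp, mul_add, ← hm, ← hn, Real.cos_add_int_mul_two_pi,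
      Real.sin_add_int_mul_two_pi]

end SphericalComponent

/-- For `A ≠ B` and `sin θ cos θ ≠ 0`, the function `f` is periodic if and only if
`A = 0` or `B = 0` or `B/A` is rational. -/
theorem fComp_periodic_iff (A B θ : ℝ) (hAB : A ≠ B)
    (hθ : Real.sin θ * Real.cos θ ≠ 0) :
    (∃ T > (0:ℝ), ∀ t : ℝ, fComp A B θ (t + T) = fComp A B θ t) ↔
    (A = 0 ∨ B = 0 ∨ ∃ r : ℚ, B / A = (r : ℝ)) := by
  calc (∃ T > (0:ℝ), ∀ t : ℝ, fComp A B θ (t + T) = fComp A B θ t)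
    _ ↔ ∃ T ≠ 0, (fComp A B θ).Periodic T := exists_pos_periodic_iff_exists_ne_zero
    _ ↔ ∃ T ≠ 0, (∃ m : ℤ, m * (2 * Real.pi) = A * T) ∧ ∃ n : ℤ, n * (2 * Real.pi) = B * T := by
      simp only [periodic_fComp_iff hθ]
    _ ↔ A = 0 ∨ B = 0 ∨ ∃ r : ℚ, B / A = (r : ℝ) :=
      exists_ne_zero_int_mul_eq_iff Real.two_pi_pos.ne'
end
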